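/- Hamilton–Jacobi theorem, hyperbolic case: the renormalized value function v is a viscosity solution on Ω of the Hamilton–Jacobi equation ½‖∇v‖_M² − U = ‖a‖_M²/2; that is, for every x ∈ Ω, one has ½‖p‖_M² − U(x) ≤ ‖a‖_M²/2 for all p ∈ D⁺v(x) and ½‖p‖_M² − U(x) ≥ ‖a‖_M²/2 for all p ∈ D⁻v(x). -/

import Mathlib

open MeasureTheory Real Set Filter Topology
open scoped RealInnerProductSpace ENNReal

noncomputable section
namespace NBodyHJ

attribute [local instance] Classical.propDecidable

abbrev Conf (d N : ℕ) := Fin N → EuclideanSpace ℝ (Fin d)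

variable {d N : ℕ}

/-- The mass inner product on the configuration space. -/
def minner (m : Fin N → ℝ) (x y : Conf d N) : ℝ := ∑ i, m i * ⟪x i, y i⟫

/-- The mass norm on the configuration space. -/
def mnorm (m : Fin N → ℝ) (x : Conf d N) : ℝ := Real.sqrt (minner m x x)

/-- Membership in the zero-barycenter configuration space `X`. -/
def inX (m : Fin N → ℝ) (x : Conf d N) : Prop := ∑ i, m i • x i = 0

/-- Collision configurations. -/
def collision (x : Conf d N) : Prop := ∃ i j, i ≠ j ∧ x i = x j

/-- Membership in the collision-free zero-barycenter space `Ω`. -/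
def inOmega (m : Fin N → ℝ) (x : Conf d N) : Prop := inX m x ∧ ¬ collision x

/-- The Newtonian potential (with junk value `0` for a colliding pair). -/
def U (m : Fin N → ℝ) (x : Conf d N) : ℝ :=
  ∑ i : Fin N, ∑ j : Fin N, if i < j then m i * m j / ‖x i - x j‖ else 0

/-- The time interval `(t₀, T)`, where `T ∈ (t₀, +∞]` is extended-real. -/
def timeSet (t0 : ℝ) (T : EReal) : Set ℝ := {t : ℝ | t0 < t ∧ (t : EReal) < T}

/-- Membership of the pair (curve, derivative) `(φ, φ')` in `D₀^{1,2}(t₀, T)`: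
`φ` starts at `0`, takes values in `X`, is the integral of `φ'` (hence locally
absolutely continuous), and `φ'` has finite `L²` mass norm on `(t₀, T)`. -/
def InD (m : Fin N → ℝ) (t0 : ℝ) (T : EReal) (φ φ' : ℝ → Conf d N) : Prop :=
  φ t0 = 0 ∧
  (∀ t : ℝ, t0 ≤ t → (t : EReal) < T → inX m (φ t)) ∧
  (∀ t : ℝ, t0 ≤ t → (t : EReal) < T → φ t = ∫ s in Set.Ioc t0 t, φ' s) ∧
  (∀ t : ℝ, t0 ≤ t → (t : EReal) < T → IntegrableOn φ' (Set.Ioc t0 t)) ∧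
  IntegrableOn (fun t => (mnorm m (φ' t)) ^ 2) (timeSet t0 T)

/-- The norm `‖φ‖_{D_T}`. -/
def Dnorm (m : Fin N → ℝ) (t0 : ℝ) (T : EReal) (φ' : ℝ → Conf d N) : ℝ :=
  Real.sqrt (∫ t in timeSet t0 T, (mnorm m (φ' t)) ^ 2)

/-- The motion `γ(t) = φ(t) + t a + x - a` associated with `φ` in the hyperbolic case. -/
def hypCurve (a x : Conf d N) (φ : ℝ → Conf d N) (t : ℝ) : Conf d N :=
  φ t + t • a + x - a

/-- The integrand of the hyperbolic renormalized Lagrangian action. -/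
def hypIntegrand (m : Fin N → ℝ) (a x : Conf d N) (φ φ' : ℝ → Conf d N) (t : ℝ) : ℝ :=
  (mnorm m (φ' t)) ^ 2 / 2 + U m (hypCurve a x φ t) - U m (t • a)

/-- The hyperbolic renormalized Lagrangian action `A_{x,[1,T]}(φ)`, with values in
`ℝ ∪ {+∞}` : it equals the integral of the renormalized Lagrangian if this integrand is
integrable and the motion is a.e. collision-free, and `+∞` otherwise. -/
def hypAction (m : Fin N → ℝ) (a x : Conf d N) (T : EReal) (φ φ' : ℝ → Conf d N) : EReal :=
  if IntegrableOn (hypIntegrand m a x φ φ') (timeSet 1 T) ∧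
      (∀ᵐ t ∂volume.restrict (timeSet 1 T), ¬ collision (hypCurve a x φ t))
  then ((∫ t in timeSet 1 T, hypIntegrand m a x φ φ' t : ℝ) : EReal)
  else (⊤ : EReal)

/-- The infimum of the hyperbolic renormalized action over `D₀^{1,2}(1,T)`. -/
def hypInf (m : Fin N → ℝ) (a x : Conf d N) (T : EReal) : EReal :=
  ⨅ (φ : ℝ → Conf d N) (φ' : ℝ → Conf d N) (_ : InD m 1 T φ φ'), hypAction m a x T φ φ'

/-- The renormalized value function `v(x)` in the hyperbolic case. -/
def hypValue (m : Fin N → ℝ) (a x : Conf d N) : ℝ :=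
  (hypInf m a x ⊤).toReal - minner m a x


/-- The zero-barycenter configuration space `X`, as a set. -/
def setX (m : Fin N → ℝ) : Set (Conf d N) := {x | inX m x}

/-- `p ∈ D⁻v(x)` : the Fréchet subdifferential of `v` at `x`, computed within `X` and with
respect to the mass inner product; the condition states
`liminf_{y → x} (v(y) − v(x) − ⟨p, y − x⟩_M)/‖y − x‖_M ≥ 0`. -/
def InSubdiff (m : Fin N → ℝ) (v : Conf d N → ℝ) (x p : Conf d N) : Prop :=
  ∀ ε > (0:ℝ), ∀ᶠ y in nhdsWithin x (setX m \ {x}),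
    -(ε * mnorm m (y - x)) ≤ v y - v x - minner m p (y - x)

/-- `p ∈ D⁺v(x)` : the Fréchet superdifferential of `v` at `x`, computed within `X` and with
respect to the mass inner product; the condition states
`limsup_{y → x} (v(y) − v(x) − ⟨p, y − x⟩_M)/‖y − x‖_M ≤ 0`. -/
def InSuperdiff (m : Fin N → ℝ) (v : Conf d N → ℝ) (x p : Conf d N) : Prop :=
  ∀ ε > (0:ℝ), ∀ᶠ y in nhdsWithin x (setX m \ {x}),
    v y - v x - minner m p (y - x) ≤ ε * mnorm m (y - x)

lemma timeSet_top (t0 : ℝ) : timeSet t0 ⊤ = Ioi t0 := by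
  ext t
  simp [timeSet, EReal.coe_lt_top]

/-- The isometric embedding of the configuration space with the mass inner product into a
Euclidean product space. -/
def massEmbed (m : Fin N → ℝ) :
    Conf d N →L[ℝ] PiLp 2 (fun _ : Fin N => EuclideanSpace ℝ (Fin d)) :=
  ((PiLp.continuousLinearEquiv 2 ℝ
    (fun _ : Fin N => EuclideanSpace ℝ (Fin d))).symm : _ →L[ℝ] _).comp
    (ContinuousLinearMap.pi fun i => √(m i) • ContinuousLinearMap.proj i)

lemma massEmbed_apply (m : Fin N → ℝ) (x : Conf d N) (i : Fin N) :
    massEmbed m x i = √(m i) • x i := rfl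

lemma minner_eq_inner {m : Fin N → ℝ} (hm : ∀ i, 0 < m i) (x y : Conf d N) :
    minner m x y = ⟪massEmbed m x, massEmbed m y⟫ := by
  rw [PiLp.inner_apply]
  refine Finset.sum_congr rfl fun i _ => ?_
  rw [massEmbed_apply, massEmbed_apply, real_inner_smul_left, real_inner_smul_right, ← mul_assoc,
    Real.mul_self_sqrt (hm i).le]

lemma mnorm_eq_norm {m : Fin N → ℝ} (hm : ∀ i, 0 < m i) (x : Conf d N) :
    mnorm m x = ‖massEmbed m x‖ := by
  rw [mnorm, minner_eq_inner hm, real_inner_self_eq_norm_sq, Real.sqrt_sq (norm_nonneg _)]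

lemma exists_norm_le_mnorm {m : Fin N → ℝ} (hm : ∀ i, 0 < m i) :
    ∃ C : ℝ, 0 < C ∧ ∀ x : Conf d N, ‖x‖ ≤ C * mnorm m x := by
  have hinj : Function.Injective (massEmbed m : Conf d N →L[ℝ] _) := by
    intro x y h
    ext1 i
    have hi : √(m i) • x i = √(m i) • y i := congrArg (fun z => z i) h
    exact smul_right_injective _ (Real.sqrt_pos.2 (hm i)).ne' hi
  obtain ⟨K, hK, h⟩ := (massEmbed m : Conf d N →L[ℝ] _).toLinearMap.exists_antilipschitzWith
    (LinearMap.ker_eq_bot.2 hinj)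
  refine ⟨K, hK, fun x => ?_⟩
  rw [mnorm_eq_norm hm]
  simpa using h.le_mul_dist x 0

lemma norm_setIntegral_sq_le {H : Type*} [NormedAddCommGroup H] [InnerProductSpace ℝ H]
    [CompleteSpace H] {f : ℝ → H} {s t : ℝ} (hst : s < t) (hf : IntegrableOn f (Ioc s t))
    (hf2 : IntegrableOn (fun r => ‖f r‖ ^ 2) (Ioc s t)) :
    ‖∫ r in Ioc s t, f r‖ ^ 2 ≤ (t - s) * ∫ r in Ioc s t, ‖f r‖ ^ 2 := by
  set I := ∫ r in Ioc s t, f r with hI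
  have hL : 0 < t - s := sub_pos.2 hst
  have h1 : ‖I‖ ^ 2 = ∫ r in Ioc s t, ⟪I, f r⟫ := by
    rw [integral_inner hf, ← hI, real_inner_self_eq_norm_sq]
  have hc : IntegrableOn (fun _ : ℝ => ‖I‖ ^ 2 / (2 * (t - s))) (Ioc s t) := by simp
  have h2 : ∫ r in Ioc s t, ⟪I, f r⟫ ≤
      ∫ r in Ioc s t, ((t - s) / 2 * ‖f r‖ ^ 2 + ‖I‖ ^ 2 / (2 * (t - s))) := by
    refine integral_mono (hf.const_inner I) ((hf2.const_mul _).add hc) fun r => ?_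
    have h := real_inner_le_norm I (f r)
    have h' : (t - s) / 2 * ‖f r‖ ^ 2 + ‖I‖ ^ 2 / (2 * (t - s)) - ‖I‖ * ‖f r‖
        = ((t - s) * ‖f r‖ - ‖I‖) ^ 2 / (2 * (t - s)) := by
      field_simp; ring
    have : 0 ≤ ((t - s) * ‖f r‖ - ‖I‖) ^ 2 / (2 * (t - s)) := by positivity
    show ⟪I, f r⟫ ≤ (t - s) / 2 * ‖f r‖ ^ 2 + ‖I‖ ^ 2 / (2 * (t - s))
    linarith
  rw [integral_add (hf2.const_mul _) hc, integral_const_mul, setIntegral_const] at h2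
  have h3 : volume.real (Ioc s t) • (‖I‖ ^ 2 / (2 * (t - s))) = ‖I‖ ^ 2 / 2 := by
    rw [Real.volume_real_Ioc_of_le hst.le, smul_eq_mul]; field_simp
  rw [h3, ← h1] at h2
  linarith

lemma inX_add {m : Fin N → ℝ} {x y : Conf d N} (hx : inX m x) (hy : inX m y) :
    inX m (x + y) := by
  simp only [inX, Pi.add_apply, smul_add, Finset.sum_add_distrib] at *
  rw [hx, hy, add_zero]

lemma inX_smul {m : Fin N → ℝ} {x : Conf d N} (c : ℝ) (hx : inX m x) : inX m (c • x) := by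
  simp only [inX, Pi.smul_apply] at *
  simp_rw [smul_comm _ c, ← Finset.smul_sum, hx, smul_zero]

lemma inX_sub {m : Fin N → ℝ} {x y : Conf d N} (hx : inX m x) (hy : inX m y) :
    inX m (x - y) := by
  simpa [sub_eq_add_neg] using inX_add hx (inX_smul (-1) hy)

lemma U_nonneg {m : Fin N → ℝ} (hm : ∀ i, 0 < m i) (x : Conf d N) : 0 ≤ U m x := by
  refine Finset.sum_nonneg fun i _ => Finset.sum_nonneg fun j _ => ?_
  have := hm i
  have := hm j
  split_ifs <;> positivity

lemma U_smul (m : Fin N → ℝ) (x : Conf d N) {t : ℝ} (ht : 0 < t) :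
    U m (t • x) = U m x / t := by
  simp only [U, Finset.sum_div]
  refine Finset.sum_congr rfl fun i _ => Finset.sum_congr rfl fun j _ => ?_
  split_ifs
  · rw [Pi.smul_apply, Pi.smul_apply, ← smul_sub, norm_smul, Real.norm_of_nonneg ht.le, div_div,
      mul_comm t]
  · simp

lemma differentiableAt_U (m : Fin N → ℝ) {x : Conf d N} (hx : ¬ collision x) :
    DifferentiableAt ℝ (U m) x := by
  unfold U
  refine DifferentiableAt.fun_sum fun i _ => DifferentiableAt.fun_sum fun j _ => ?_
  split_ifs with hij
  · have hne : x i - x j ≠ 0 := fun h => hx ⟨i, j, hij.ne, sub_eq_zero.1 h⟩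
    have hd : DifferentiableAt ℝ (fun y : Conf d N => y i - y j) x := by fun_prop
    have hn : DifferentiableAt ℝ (fun y : Conf d N => ‖y i - y j‖) x := hd.norm ℝ hne
    simp only [div_eq_mul_inv]
    exact (hn.fun_inv (norm_ne_zero_iff.2 hne)).const_mul _
  · exact differentiableAt_const _

lemma eventually_not_collision {x : Conf d N} (hx : ¬ collision x) :
    ∀ᶠ y in 𝓝 x, ¬ collision y := by
  have h : ∀ i j : Fin N, ∀ᶠ y : Conf d N in 𝓝 x, i ≠ j → y i ≠ y j := by
    intro i j
    by_cases hij : i = j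
    · simp [hij]
    have hne : x i ≠ x j := fun h => hx ⟨i, j, hij, h⟩
    have hc : ContinuousAt (fun y : Conf d N => y i - y j) x := by fun_prop
    exact (hc.eventually_ne (sub_ne_zero.2 hne)).mono fun y hy _ => sub_ne_zero.1 hy
  filter_upwards [eventually_all.2 fun i => eventually_all.2 (h i)] with y hy
  rintro ⟨i, j, hij, e⟩
  exact hy i j hij e

lemma exists_U_near (m : Fin N → ℝ) {x : Conf d N} (hx : ¬ collision x) {ε : ℝ} (hε : 0 < ε) :
    ∃ δ > 0, ∀ y, ‖y - x‖ < δ → ¬ collision y ∧ |U m y - U m x| < ε := by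
  have h := (eventually_not_collision hx).and
    ((differentiableAt_U m hx).continuousAt.eventually (Metric.ball_mem_nhds _ hε))
  obtain ⟨δ, hδ, h⟩ := Metric.eventually_nhds_iff.1 h
  refine ⟨δ, hδ, fun y hy => ?_⟩
  have := h (y := y) (by rwa [dist_eq_norm])
  rwa [Real.dist_eq] at this

/-- Curves of finite renormalized action issuing from `x`. -/
structure FiniteAction (m : Fin N → ℝ) (a x : Conf d N) (φ φ' : ℝ → Conf d N) : Prop where
  inD : InD m 1 ⊤ φ φ'
  integrable : IntegrableOn (hypIntegrand m a x φ φ') (Ioi 1)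
  ae_not_collision : ∀ᵐ t ∂volume.restrict (Ioi 1), ¬ collision (hypCurve a x φ t)

lemma FiniteAction.hypAction_eq {m : Fin N → ℝ} {a x : Conf d N} {φ φ' : ℝ → Conf d N}
    (h : FiniteAction m a x φ φ') :
    hypAction m a x ⊤ φ φ' = ((∫ t in Ioi 1, hypIntegrand m a x φ φ' t : ℝ) : EReal) := by
  rw [hypAction, timeSet_top, if_pos ⟨h.integrable, h.ae_not_collision⟩]

lemma InD.inX {m : Fin N → ℝ} {φ φ' : ℝ → Conf d N} (h : InD m 1 ⊤ φ φ') {t : ℝ}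
    (ht : 1 ≤ t) : inX m (φ t) := h.2.1 t ht (EReal.coe_lt_top t)

lemma InD.eq_integral {m : Fin N → ℝ} {φ φ' : ℝ → Conf d N} (h : InD m 1 ⊤ φ φ') {t : ℝ}
    (ht : 1 ≤ t) : φ t = ∫ s in Ioc 1 t, φ' s := h.2.2.1 t ht (EReal.coe_lt_top t)

lemma InD.integrableOn {m : Fin N → ℝ} {φ φ' : ℝ → Conf d N} (h : InD m 1 ⊤ φ φ') {t : ℝ}
    (ht : 1 ≤ t) : IntegrableOn φ' (Ioc 1 t) := h.2.2.2.1 t ht (EReal.coe_lt_top t)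

lemma InD.integrableOn_sq {m : Fin N → ℝ} {φ φ' : ℝ → Conf d N} (h : InD m 1 ⊤ φ φ') :
    IntegrableOn (fun t => mnorm m (φ' t) ^ 2) (Ioi 1) := by
  have := h.2.2.2.2
  rwa [timeSet_top] at this

lemma InD.mnorm_sq_le {m : Fin N → ℝ} (hm : ∀ i, 0 < m i) {φ φ' : ℝ → Conf d N}
    (h : InD m 1 ⊤ φ φ') {t : ℝ} (ht : 1 < t) :
    mnorm m (φ t) ^ 2 ≤ (t - 1) * ∫ s in Ioc 1 t, mnorm m (φ' s) ^ 2 := by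
  have h2 := h.integrableOn_sq.mono_set (Ioc_subset_Ioi_self : Ioc 1 t ⊆ Ioi 1)
  have h1 := h.integrableOn ht.le
  simp only [mnorm_eq_norm hm] at h2 ⊢
  rw [h.eq_integral ht.le, ← ContinuousLinearMap.integral_comp_comm _ h1]
  exact norm_setIntegral_sq_le ht (ContinuousLinearMap.integrable_comp _ h1) h2

lemma InD.mnorm_sq_le_energy {m : Fin N → ℝ} (hm : ∀ i, 0 < m i) {φ φ' : ℝ → Conf d N}
    (h : InD m 1 ⊤ φ φ') {t : ℝ} (ht : 1 ≤ t) :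
    mnorm m (φ t) ^ 2 ≤ (t - 1) * ∫ s in Ioi 1, mnorm m (φ' s) ^ 2 := by
  rcases ht.eq_or_lt with rfl | ht
  · simp [h.1, mnorm, minner]
  refine (h.mnorm_sq_le hm ht).trans (mul_le_mul_of_nonneg_left ?_ (by linarith))
  exact setIntegral_mono_set h.integrableOn_sq (ae_of_all _ fun _ => sq_nonneg _)
    Ioc_subset_Ioi_self.eventuallyLE

lemma inv_norm_sub_ge {E : Type*} [NormedAddCommGroup E] [NormedSpace ℝ E] {b r : E} {t : ℝ}
    (ht : 0 < t) (hb : b ≠ 0) (hne : r + t • b ≠ 0) :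
    1 / (t * ‖b‖) - ‖r‖ / (t ^ 2 * ‖b‖ ^ 2) ≤ 1 / ‖r + t • b‖ := by
  have hb' : 0 < ‖b‖ := norm_pos_iff.2 hb
  have hr := norm_nonneg r
  have h1 : ‖r + t • b‖ ≤ ‖r‖ + t * ‖b‖ := by
    simpa [norm_smul, abs_of_pos ht] using norm_add_le r (t • b)
  have h2 : 1 / (‖r‖ + t * ‖b‖) ≤ 1 / ‖r + t • b‖ :=
    one_div_le_one_div_of_le (norm_pos_iff.2 hne) h1
  refine le_trans ?_ h2
  have h3 : 1 / (‖r‖ + t * ‖b‖) - (1 / (t * ‖b‖) - ‖r‖ / (t ^ 2 * ‖b‖ ^ 2))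
      = ‖r‖ ^ 2 / (t ^ 2 * ‖b‖ ^ 2 * (‖r‖ + t * ‖b‖)) := by
    field_simp; ring
  have : 0 ≤ ‖r‖ ^ 2 / (t ^ 2 * ‖b‖ ^ 2 * (‖r‖ + t * ‖b‖)) := by positivity
  linarith

lemma exists_U_add_smul_ge {m : Fin N → ℝ} (hm : ∀ i, 0 < m i) {a : Conf d N}
    (ha : ¬ collision a) :
    ∃ B : ℝ, 0 ≤ B ∧ ∀ (z : Conf d N) (t : ℝ), 0 < t → ¬ collision (z + t • a) →
      -(B * (‖z‖ / t ^ 2)) ≤ U m (z + t • a) - U m (t • a) := by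
  refine ⟨∑ i, ∑ j, if i < j then m i * m j * (2 / ‖a i - a j‖ ^ 2) else 0, ?_, ?_⟩
  · refine Finset.sum_nonneg fun i _ => Finset.sum_nonneg fun j _ => ?_
    have := hm i
    have := hm j
    split_ifs <;> positivity
  intro z t ht hz
  simp only [U, ← Finset.sum_sub_distrib, Finset.sum_mul, ← Finset.sum_neg_distrib]
  refine Finset.sum_le_sum fun i _ => Finset.sum_le_sum fun j _ => ?_
  split_ifs with hij
  swap
  · simp
  have hb : a i - a j ≠ 0 := fun h => ha ⟨i, j, hij.ne, sub_eq_zero.1 h⟩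
  have hb' : 0 < ‖a i - a j‖ := norm_pos_iff.2 hb
  have e1 : (z + t • a) i - (z + t • a) j = (z i - z j) + t • (a i - a j) := by
    simp only [Pi.add_apply, Pi.smul_apply, smul_sub]; abel
  have e2 : (t • a) i - (t • a) j = t • (a i - a j) := by
    simp only [Pi.smul_apply, smul_sub]
  have hne : (z i - z j) + t • (a i - a j) ≠ 0 := by
    rw [← e1]
    exact fun h => hz ⟨i, j, hij.ne, sub_eq_zero.1 h⟩
  have h := inv_norm_sub_ge ht hb hne
  have hr : ‖z i - z j‖ ≤ 2 * ‖z‖ := by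
    have := norm_sub_le (z i) (z j)
    have := norm_le_pi_norm z i
    have := norm_le_pi_norm z j
    linarith
  have hr' : ‖z i - z j‖ / (t ^ 2 * ‖a i - a j‖ ^ 2) ≤ 2 * ‖z‖ / (t ^ 2 * ‖a i - a j‖ ^ 2) := by
    gcongr
  rw [e1, e2, norm_smul, Real.norm_of_nonneg ht.le]
  have hmm : 0 < m i * m j := mul_pos (hm i) (hm j)
  have key : -(2 * ‖z‖ / (t ^ 2 * ‖a i - a j‖ ^ 2)) ≤
      1 / ‖z i - z j + t • (a i - a j)‖ - 1 / (t * ‖a i - a j‖) := by linarith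
  calc -(m i * m j * (2 / ‖a i - a j‖ ^ 2) * (‖z‖ / t ^ 2))
      = m i * m j * -(2 * ‖z‖ / (t ^ 2 * ‖a i - a j‖ ^ 2)) := by field_simp
    _ ≤ m i * m j * (1 / ‖z i - z j + t • (a i - a j)‖ - 1 / (t * ‖a i - a j‖)) :=
        mul_le_mul_of_nonneg_left key hmm.le
    _ = _ := by ring

/-- Coercivity of the renormalized action. -/
lemma exists_energy_le_action {m : Fin N → ℝ} (hm : ∀ i, 0 < m i) {a : Conf d N}
    (ha : ¬ collision a) (x : Conf d N) :
    ∃ C : ℝ, ∀ φ φ', FiniteAction m a x φ φ' →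
      (∫ t in Ioi 1, mnorm m (φ' t) ^ 2) / 4 - C ≤ ∫ t in Ioi 1, hypIntegrand m a x φ φ' t := by
  obtain ⟨B, hB, hU⟩ := exists_U_add_smul_ge hm ha
  obtain ⟨K, hK, hnorm⟩ := exists_norm_le_mnorm (d := d) hm
  set J : ℝ := ∫ t in Ioi (1 : ℝ), t ^ (-3 / 2 : ℝ)
  have hJi : IntegrableOn (fun t : ℝ => t ^ (-3 / 2 : ℝ)) (Ioi 1) :=
    integrableOn_Ioi_rpow_of_lt (by norm_num) one_pos
  refine ⟨(B * K * J) ^ 2 + B * ‖x - a‖ * J, fun φ φ' h => ?_⟩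
  set E := ∫ t in Ioi 1, mnorm m (φ' t) ^ 2 with hE
  have hE0 : 0 ≤ E := integral_nonneg fun _ => sq_nonneg _
  have hsqrt : √E ^ 2 = E := Real.sq_sqrt hE0
  have hlow : ∀ᵐ t ∂volume.restrict (Ioi (1 : ℝ)),
      mnorm m (φ' t) ^ 2 / 2 - B * (K * √E + ‖x - a‖) * t ^ (-3 / 2 : ℝ)
        ≤ hypIntegrand m a x φ φ' t := by
    filter_upwards [h.ae_not_collision, ae_restrict_mem measurableSet_Ioi] with t hc ht
    have ht : 1 < t := ht
    have ht0 : 0 < t := by linarith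
    have e : hypCurve a x φ t = (φ t + (x - a)) + t • a := by
      simp only [hypCurve]; abel
    rw [e] at hc
    have h1 := hU _ t ht0 hc
    rw [hypIntegrand, e]
    have hs1 : 1 ≤ √t := Real.one_le_sqrt.2 ht.le
    have h2 : mnorm m (φ t) ≤ √t * √E := by
      rw [← Real.sqrt_mul ht0.le]
      refine Real.le_sqrt_of_sq_le ((h.inD.mnorm_sq_le_energy hm ht.le).trans ?_)
      exact mul_le_mul_of_nonneg_right (by linarith) hE0
    have h3 : ‖φ t + (x - a)‖ ≤ (K * √E + ‖x - a‖) * √t := by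
      have := norm_add_le (φ t) (x - a)
      have := hnorm (φ t)
      have := mul_le_mul_of_nonneg_left h2 hK.le
      have := mul_le_mul_of_nonneg_left hs1 (norm_nonneg (x - a))
      linarith
    have h4 : √t / t ^ 2 = t ^ (-3 / 2 : ℝ) := by
      rw [Real.sqrt_eq_rpow, ← Real.rpow_natCast, ← Real.rpow_sub ht0]; norm_num
    have h5 : ‖φ t + (x - a)‖ / t ^ 2 ≤ (K * √E + ‖x - a‖) * t ^ (-3 / 2 : ℝ) := by
      rw [← h4, ← mul_div_assoc]; gcongr
    have h6 := mul_le_mul_of_nonneg_left h5 hB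
    linarith
  have hi1 : IntegrableOn (fun t => mnorm m (φ' t) ^ 2 / 2) (Ioi 1) :=
    h.inD.integrableOn_sq.div_const 2
  have hi2 := hJi.const_mul (B * (K * √E + ‖x - a‖))
  have hint := integral_mono_ae (hi1.sub hi2) h.integrable hlow
  rw [integral_sub' hi1 hi2, integral_div, integral_const_mul] at hint
  change E / 2 - B * (K * √E + ‖x - a‖) * J ≤ _ at hint
  nlinarith [sq_nonneg (√E / 2 - B * K * J)]

lemma hypInf_le {m : Fin N → ℝ} {a x : Conf d N} {φ φ' : ℝ → Conf d N}
    (h : FiniteAction m a x φ φ') :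
    hypInf m a x ⊤ ≤ ((∫ t in Ioi 1, hypIntegrand m a x φ φ' t : ℝ) : EReal) := by
  rw [← h.hypAction_eq]
  exact iInf_le_of_le φ (iInf_le_of_le φ' (iInf_le _ h.inD))

lemma hypInf_ne_bot {m : Fin N → ℝ} (hm : ∀ i, 0 < m i) {a : Conf d N} (ha : ¬ collision a)
    (x : Conf d N) : hypInf m a x ⊤ ≠ ⊥ := by
  obtain ⟨C, hC⟩ := exists_energy_le_action hm ha x
  have : ((-C : ℝ) : EReal) ≤ hypInf m a x ⊤ := by
    refine le_iInf fun φ => le_iInf fun φ' => le_iInf fun hD => ?_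
    rw [hypAction, timeSet_top]
    split_ifs with h
    · have h' := hC φ φ' ⟨hD, h.1, h.2⟩
      have : 0 ≤ ∫ t in Ioi 1, mnorm m (φ' t) ^ 2 := integral_nonneg fun _ => sq_nonneg _
      exact EReal.coe_le_coe_iff.2 (by linarith)
    · exact le_top
  exact fun hbot => absurd (hbot ▸ this) (by simp)

lemma toReal_hypInf_le {m : Fin N → ℝ} (hm : ∀ i, 0 < m i) {a x : Conf d N}
    (ha : ¬ collision a) {φ φ' : ℝ → Conf d N} (h : FiniteAction m a x φ φ') :
    (hypInf m a x ⊤).toReal ≤ ∫ t in Ioi 1, hypIntegrand m a x φ φ' t := by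
  have := EReal.toReal_le_toReal (hypInf_le h) (hypInf_ne_bot hm ha x) (EReal.coe_ne_top _)
  rwa [EReal.toReal_coe] at this

lemma exists_action_lt {m : Fin N → ℝ} (hm : ∀ i, 0 < m i) {a x : Conf d N}
    (ha : ¬ collision a) (hfin : ∃ φ φ', FiniteAction m a x φ φ') {ε : ℝ} (hε : 0 < ε) :
    ∃ φ φ', FiniteAction m a x φ φ' ∧
      ∫ t in Ioi 1, hypIntegrand m a x φ φ' t < (hypInf m a x ⊤).toReal + ε := by
  obtain ⟨φ₀, φ₀', h₀⟩ := hfin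
  have htop : hypInf m a x ⊤ ≠ ⊤ := fun h => by
    have := hypInf_le h₀
    rw [h, top_le_iff] at this
    exact EReal.coe_ne_top _ this
  have hlt : hypInf m a x ⊤ < (((hypInf m a x ⊤).toReal + ε : ℝ) : EReal) := by
    conv_lhs => rw [← EReal.coe_toReal htop (hypInf_ne_bot hm ha x)]
    exact EReal.coe_lt_coe_iff.2 (by linarith)
  nth_rewrite 1 [hypInf] at hlt
  simp only [iInf_lt_iff] at hlt
  obtain ⟨φ, φ', hD, hlt⟩ := hlt
  by_cases h : IntegrableOn (hypIntegrand m a x φ φ') (timeSet 1 ⊤) ∧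
      (∀ᵐ t ∂volume.restrict (timeSet 1 ⊤), ¬ collision (hypCurve a x φ t))
  · rw [timeSet_top] at h
    have hF : FiniteAction m a x φ φ' := ⟨hD, h.1, h.2⟩
    rw [hF.hypAction_eq, EReal.coe_lt_coe_iff] at hlt
    exact ⟨φ, φ', hF, hlt⟩
  · rw [hypAction, if_neg h] at hlt
    exact absurd hlt not_top_lt

lemma measurePreserving_add_Ioi (u τ : ℝ) :
    MeasurePreserving (fun s : ℝ => s + τ) (volume.restrict (Ioi u))
      (volume.restrict (Ioi (u + τ))) := by
  have h := (measurePreserving_add_right volume τ).restrict_preimage_emb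
    (measurableEmbedding_addRight τ) (Ioi (u + τ))
  simpa using h

lemma measurePreserving_add_Ioc (u v τ : ℝ) :
    MeasurePreserving (fun s : ℝ => s + τ) (volume.restrict (Ioc u v))
      (volume.restrict (Ioc (u + τ) (v + τ))) := by
  have h := (measurePreserving_add_right volume τ).restrict_preimage_emb
    (measurableEmbedding_addRight τ) (Ioc (u + τ) (v + τ))
  simpa using h

lemma integrableOn_const_div_Ioc (c t : ℝ) : IntegrableOn (fun s => c / s) (Ioc 1 t) := by
  refine (ContinuousOn.integrableOn_Icc ?_).mono_set Ioc_subset_Icc_self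
  exact continuousOn_const.div continuousOn_id fun s hs => by
    have := hs.1
    linarith

lemma integrableOn_and_integral_div_sub_div {τ : ℝ} (hτ : 0 < τ) (c : ℝ) :
    IntegrableOn (fun s => c / s - c / (s + τ)) (Ioi 1) ∧
      ∫ s in Ioi 1, (c / s - c / (s + τ)) = ∫ t in Ioc 1 (1 + τ), c / t := by
  have hd : ∀ s ∈ Ici (1 : ℝ), HasDerivAt (fun s => Real.log s - Real.log (s + τ))
      (1 / s - 1 / (s + τ)) s := fun s hs => by
    have hs : 1 ≤ s := hs
    have h1 := Real.hasDerivAt_log (x := s) (by linarith)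
    have h2 := ((hasDerivAt_id s).add_const τ).log (by simp only [id]; linarith)
    simpa using h1.fun_sub h2
  have hpos : ∀ s ∈ Ioi (1 : ℝ), 0 ≤ 1 / s - 1 / (s + τ) := fun s hs => by
    have hs : 1 < s := hs
    exact sub_nonneg.2 (one_div_le_one_div_of_le (by linarith) (by linarith))
  have hlim : Tendsto (fun s => Real.log s - Real.log (s + τ)) atTop (𝓝 0) := by
    simpa using (Real.tendsto_log_comp_add_sub_log τ).neg
  have e : (fun s => c / s - c / (s + τ)) = fun s => c * (1 / s - 1 / (s + τ)) := by
    ext s; ring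
  rw [e]
  refine ⟨(integrableOn_Ioi_deriv_of_nonneg' hd hpos hlim).const_mul c, ?_⟩
  rw [integral_const_mul, integral_Ioi_of_hasDerivAt_of_nonneg' hd hpos hlim,
    ← intervalIntegral.integral_of_le (by linarith)]
  simp_rw [div_eq_mul_inv]
  rw [intervalIntegral.integral_const_mul, integral_inv_of_pos one_pos (by linarith)]
  simp

lemma hypIntegrand_add {m : Fin N → ℝ} {a x y : Conf d N} {τ s : ℝ} (hτ : 0 < τ) (hs : 1 < s)
    {Φ Φ' φ φ' : ℝ → Conf d N} (hcurve : hypCurve a x Φ (s + τ) = hypCurve a y φ s)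
    (hderiv : Φ' (s + τ) = φ' s) :
    hypIntegrand m a x Φ Φ' (s + τ)
      = hypIntegrand m a y φ φ' s + (U m a / s - U m a / (s + τ)) := by
  rw [hypIntegrand, hypIntegrand, hcurve, hderiv, U_smul m a (by linarith : 0 < s + τ),
    U_smul m a (by linarith : 0 < s)]
  ring

section TimeShift

variable {m : Fin N → ℝ} {a x y : Conf d N} {τ : ℝ} {Φ Φ' φ φ' : ℝ → Conf d N}

lemma integrableOn_hypIntegrand_shift_iff (hτ : 0 < τ)
    (hcurve : ∀ s, 1 < s → hypCurve a x Φ (s + τ) = hypCurve a y φ s)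
    (hderiv : ∀ s, 1 < s → Φ' (s + τ) = φ' s) :
    IntegrableOn (hypIntegrand m a x Φ Φ') (Ioi (1 + τ)) ↔
      IntegrableOn (hypIntegrand m a y φ φ') (Ioi 1) := by
  have hI := (integrableOn_and_integral_div_sub_div hτ (U m a)).1
  rw [IntegrableOn, ← (measurePreserving_add_Ioi 1 τ).integrable_comp_emb
    (measurableEmbedding_addRight τ)]
  change IntegrableOn (fun s => hypIntegrand m a x Φ Φ' (s + τ)) (Ioi 1) ↔ _
  rw [integrableOn_congr_fun (s := Ioi 1) (g := fun s =>
    hypIntegrand m a y φ φ' s + (U m a / s - U m a / (s + τ)))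
    (fun s hs => hypIntegrand_add hτ hs (hcurve s hs) (hderiv s hs)) measurableSet_Ioi]
  exact integrable_add_iff_integrable_left hI

lemma integral_hypIntegrand_shift (hτ : 0 < τ)
    (hcurve : ∀ s, 1 < s → hypCurve a x Φ (s + τ) = hypCurve a y φ s)
    (hderiv : ∀ s, 1 < s → Φ' (s + τ) = φ' s)
    (h : IntegrableOn (hypIntegrand m a x Φ Φ') (Ioi 1)) :
    ∫ t in Ioi 1, hypIntegrand m a x Φ Φ' t =
      (∫ t in Ioc 1 (1 + τ), (mnorm m (Φ' t) ^ 2 / 2 + U m (hypCurve a x Φ t))) +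
        ∫ t in Ioi 1, hypIntegrand m a y φ φ' t := by
  have hI := integrableOn_and_integral_div_sub_div hτ (U m a)
  have hu : Ioc 1 (1 + τ) ∪ Ioi (1 + τ) = Ioi (1 : ℝ) := Ioc_union_Ioi_eq_Ioi (by linarith)
  have h1 : IntegrableOn (hypIntegrand m a x Φ Φ') (Ioc 1 (1 + τ)) :=
    h.mono_set Ioc_subset_Ioi_self
  have h2 : IntegrableOn (hypIntegrand m a x Φ Φ') (Ioi (1 + τ)) :=
    h.mono_set (Ioi_subset_Ioi (by linarith))
  have h3 := (integrableOn_hypIntegrand_shift_iff hτ hcurve hderiv).1 h2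
  have hc := integrableOn_const_div_Ioc (U m a) (1 + τ)
  have e1 : ∫ t in Ioi (1 + τ), hypIntegrand m a x Φ Φ' t =
      (∫ t in Ioi 1, hypIntegrand m a y φ φ' t) + ∫ t in Ioc 1 (1 + τ), U m a / t := by
    rw [← hI.2, ← integral_add h3 hI.1, ← (measurePreserving_add_Ioi 1 τ).integral_comp
      (measurableEmbedding_addRight τ)]
    exact setIntegral_congr_fun measurableSet_Ioi
      (fun s hs => hypIntegrand_add hτ hs (hcurve s hs) (hderiv s hs))
  have e2 : ∫ t in Ioc 1 (1 + τ), (mnorm m (Φ' t) ^ 2 / 2 + U m (hypCurve a x Φ t)) =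
      (∫ t in Ioc 1 (1 + τ), hypIntegrand m a x Φ Φ' t) + ∫ t in Ioc 1 (1 + τ), U m a / t := by
    rw [← integral_add h1 hc]
    refine setIntegral_congr_fun measurableSet_Ioc fun t ht => ?_
    have ht0 : 0 < t := by linarith [ht.1]
    simp only [hypIntegrand]
    rw [U_smul m a ht0]
    ring
  rw [← hu, setIntegral_union (Ioc_disjoint_Ioi le_rfl) measurableSet_Ioi h1 h2, hu, e1, e2]
  ring

end TimeShift

/-- The tail of a curve of finite action has finite action. -/
lemma FiniteAction.exists_tail {m : Fin N → ℝ} {a x : Conf d N}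
    {φ φ' : ℝ → Conf d N} (h : FiniteAction m a x φ φ') {τ : ℝ} (hτ : 0 < τ) :
    ∃ ψ ψ', FiniteAction m a (hypCurve a x φ (1 + τ)) ψ ψ' ∧
      ∫ t in Ioi 1, hypIntegrand m a x φ φ' t =
        (∫ t in Ioc 1 (1 + τ), (mnorm m (φ' t) ^ 2 / 2 + U m (hypCurve a x φ t))) +
          ∫ t in Ioi 1, hypIntegrand m a (hypCurve a x φ (1 + τ)) ψ ψ' t := by
  have hcurve : ∀ s, 1 < s → hypCurve a x φ (s + τ) =
      hypCurve a (hypCurve a x φ (1 + τ)) (fun t => φ (t + τ) - φ (1 + τ)) s := fun s _ => by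
    simp only [hypCurve]; module
  have hmp := measurePreserving_add_Ioi 1 τ
  have hsub : Ioi (1 + τ) ⊆ Ioi (1 : ℝ) := Ioi_subset_Ioi (by linarith)
  refine ⟨fun t => φ (t + τ) - φ (1 + τ), fun t => φ' (t + τ), ⟨⟨by simp, ?_, ?_, ?_, ?_⟩, ?_, ?_⟩,
    integral_hypIntegrand_shift hτ hcurve (fun _ _ => rfl) h.integrable⟩
  · exact fun t ht _ => inX_sub (h.inD.inX (by linarith)) (h.inD.inX (by linarith))
  · intro t ht _
    have e := (measurePreserving_add_Ioc 1 t τ).integral_comp (measurableEmbedding_addRight τ) φ'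
    have hu : Ioc 1 (1 + τ) ∪ Ioc (1 + τ) (t + τ) = Ioc 1 (t + τ) :=
      Ioc_union_Ioc_eq_Ioc (by linarith) (by linarith)
    have hi : IntegrableOn φ' (Ioc 1 (t + τ)) := h.inD.integrableOn (by linarith)
    rw [← hu] at hi
    change φ (t + τ) - φ (1 + τ) = _
    rw [e, h.inD.eq_integral (by linarith : 1 ≤ t + τ),
      h.inD.eq_integral (by linarith : 1 ≤ 1 + τ),
      ← hu, setIntegral_union (Ioc_disjoint_Ioc_of_le le_rfl) measurableSet_Ioc
        (hi.mono_set subset_union_left) (hi.mono_set subset_union_right)]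
    abel
  · intro t ht _
    refine ((measurePreserving_add_Ioc 1 t τ).integrable_comp_emb
      (measurableEmbedding_addRight τ)).2 ?_
    exact (h.inD.integrableOn (by linarith : 1 ≤ t + τ)).mono_set
      (Ioc_subset_Ioc_left (by linarith))
  · rw [timeSet_top]
    exact (hmp.integrable_comp_emb (measurableEmbedding_addRight τ)).2
      (h.inD.integrableOn_sq.mono_set hsub)
  · exact (integrableOn_hypIntegrand_shift_iff hτ hcurve fun _ _ => rfl).1
      (h.integrable.mono_set hsub)
  · have := hmp.quasiMeasurePreserving.ae (ae_restrict_of_ae_restrict_of_subset hsub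
      h.ae_not_collision)
    filter_upwards [this, ae_restrict_mem measurableSet_Ioi] with s hs hs1
    rwa [← hcurve s hs1]

/-- Prepending a collision-free segment to a curve of finite action. -/
lemma FiniteAction.exists_prepend {m : Fin N → ℝ} {a x w : Conf d N} (ha : inX m a)
    (hw : inX m w) {τ : ℝ} (hτ : 0 < τ) (hcol : ∀ s ∈ Icc 0 τ, ¬ collision (x + s • w))
    {φ φ' : ℝ → Conf d N} (h : FiniteAction m a (x + τ • w) φ φ') :
    ∃ ψ ψ', FiniteAction m a x ψ ψ' ∧
      ∫ t in Ioi 1, hypIntegrand m a x ψ ψ' t =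
        (∫ t in Ioc 1 (1 + τ), (mnorm m (w - a) ^ 2 / 2 + U m (x + (t - 1) • w))) +
          ∫ t in Ioi 1, hypIntegrand m a (x + τ • w) φ φ' t := by
  set ψ : ℝ → Conf d N := fun t =>
    if t ≤ 1 + τ then (t - 1) • (w - a) else τ • (w - a) + φ (t - τ) with hψ
  set ψ' : ℝ → Conf d N := fun t => if t ≤ 1 + τ then w - a else φ' (t - τ) with hψ'
  have hψ1 : ∀ t, t ≤ 1 + τ → ψ t = (t - 1) • (w - a) := fun t ht => if_pos ht
  have hψ1' : ∀ t, t ≤ 1 + τ → ψ' t = w - a := fun t ht => if_pos ht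
  have hψ2 : ∀ s, 1 < s → ψ (s + τ) = τ • (w - a) + φ s := fun s hs => by
    simp only [hψ, if_neg (by linarith : ¬ s + τ ≤ 1 + τ), add_sub_cancel_right]
  have hψ2' : ∀ s, 1 < s → ψ' (s + τ) = φ' s := fun s hs => by
    simp only [hψ', if_neg (by linarith : ¬ s + τ ≤ 1 + τ), add_sub_cancel_right]
  have hcurve : ∀ s, 1 < s → hypCurve a x ψ (s + τ) = hypCurve a (x + τ • w) φ s :=
    fun s hs => by simp only [hypCurve, hψ2 s hs]; module
  have hcurve1 : ∀ t, t ≤ 1 + τ → hypCurve a x ψ t = x + (t - 1) • w :=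
    fun t ht => by simp only [hypCurve, hψ1 t ht]; module
  have hmp := measurePreserving_add_Ioi 1 τ
  have hu : Ioc 1 (1 + τ) ∪ Ioi (1 + τ) = Ioi (1 : ℝ) := Ioc_union_Ioi_eq_Ioi (by linarith)
  have hcol1 : ∀ t ∈ Icc 1 (1 + τ), ¬ collision (x + (t - 1) • w) := fun t ht =>
    hcol _ ⟨by linarith [ht.1], by linarith [ht.2]⟩
  have hconst : ∀ t, t ≤ 1 + τ → IntegrableOn ψ' (Ioc 1 t) := fun t ht =>
    (integrableOn_congr_fun (f := fun _ => w - a)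
      (fun s hs => (hψ1' s (hs.2.trans ht)).symm) measurableSet_Ioc).1 (by simp)
  have hiconst : ∀ t, 1 ≤ t → t ≤ 1 + τ → ∫ s in Ioc 1 t, ψ' s = (t - 1) • (w - a) := by
    intro t ht ht'
    rw [setIntegral_congr_fun (g := fun _ => w - a) measurableSet_Ioc
      (fun s hs => hψ1' s (hs.2.trans ht')), setIntegral_const, Real.volume_real_Ioc_of_le ht]
  have htail : ∀ t, 1 ≤ t → IntegrableOn ψ' (Ioc (1 + τ) (t + τ)) := fun t ht => by
    rw [IntegrableOn, ← (measurePreserving_add_Ioc 1 t τ).integrable_comp_emb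
      (measurableEmbedding_addRight τ)]
    exact (integrableOn_congr_fun (fun s hs => (hψ2' s hs.1).symm) measurableSet_Ioc).1
      (h.inD.integrableOn ht)
  have hitail : ∀ t, 1 ≤ t → ∫ s in Ioc (1 + τ) (t + τ), ψ' s = φ t := fun t ht => by
    rw [← (measurePreserving_add_Ioc 1 t τ).integral_comp (measurableEmbedding_addRight τ),
      h.inD.eq_integral ht]
    exact setIntegral_congr_fun measurableSet_Ioc fun s hs => hψ2' s hs.1
  have hsplit : ∀ s, 1 < s → Ioc 1 (1 + τ) ∪ Ioc (1 + τ) (s + τ) = Ioc 1 (s + τ) := fun s hs =>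
    Ioc_union_Ioc_eq_Ioc (by linarith) (by linarith)
  have hcases : ∀ t, 1 + τ < t → ∃ s, 1 < s ∧ t = s + τ := fun t ht =>
    ⟨t - τ, by linarith, by ring⟩
  have hint : IntegrableOn (hypIntegrand m a x ψ ψ') (Ioi 1) := by
    rw [← hu]
    refine IntegrableOn.union ?_ ((integrableOn_hypIntegrand_shift_iff hτ hcurve hψ2').2
      h.integrable)
    have hc : ContinuousOn (fun t : ℝ => mnorm m (w - a) ^ 2 / 2 + U m (x + (t - 1) • w)
        - U m a / t) (Icc 1 (1 + τ)) := by
      intro t ht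
      have ht0 : t ≠ 0 := by linarith [ht.1]
      have hU : ContinuousAt (fun t : ℝ => U m (x + (t - 1) • w)) t :=
        ContinuousAt.comp (g := U m) (f := fun t : ℝ => x + (t - 1) • w)
          (differentiableAt_U m (hcol1 t ht)).continuousAt (by fun_prop)
      exact ((continuousAt_const.add hU).sub
        (continuousAt_const.div continuousAt_id ht0)).continuousWithinAt
    refine (integrableOn_congr_fun (fun t ht => ?_) measurableSet_Ioc).1
      (hc.integrableOn_Icc.mono_set Ioc_subset_Icc_self)
    simp only [hypIntegrand, hψ1' t ht.2, hcurve1 t ht.2]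
    rw [U_smul m a (by linarith [ht.1])]
  have hae : ∀ᵐ t ∂volume.restrict (Ioi 1), ¬ collision (hypCurve a x ψ t) := by
    rw [← hu, ae_restrict_union_iff]
    constructor
    · filter_upwards [ae_restrict_mem measurableSet_Ioc] with t ht
      rw [hcurve1 t ht.2]
      exact hcol1 t ⟨ht.1.le, ht.2⟩
    · rw [← hmp.map_eq, (measurableEmbedding_addRight τ).ae_map_iff]
      filter_upwards [h.ae_not_collision, ae_restrict_mem measurableSet_Ioi] with s hs hs1
      rwa [hcurve s hs1]
  refine ⟨ψ, ψ', ⟨⟨?_, ?_, ?_, ?_, ?_⟩, hint, hae⟩, ?_⟩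
  · rw [hψ1 1 (by linarith)]; simp
  · intro t ht _
    by_cases ht' : t ≤ 1 + τ
    · rw [hψ1 t ht']
      exact inX_smul _ (inX_sub hw ha)
    · obtain ⟨s, hs, rfl⟩ := hcases t (not_le.1 ht')
      rw [hψ2 s hs]
      exact inX_add (inX_smul _ (inX_sub hw ha)) (h.inD.inX hs.le)
  · intro t ht _
    by_cases ht' : t ≤ 1 + τ
    · rw [hψ1 t ht', hiconst t ht ht']
    · obtain ⟨s, hs, rfl⟩ := hcases t (not_le.1 ht')
      rw [hψ2 s hs, ← hsplit s hs, setIntegral_union (Ioc_disjoint_Ioc_of_le le_rfl)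
        measurableSet_Ioc (hconst _ le_rfl) (htail s hs.le), hiconst _ (by linarith) le_rfl,
        hitail s hs.le, add_sub_cancel_left]
  · intro t ht _
    by_cases ht' : t ≤ 1 + τ
    · exact hconst t ht'
    · obtain ⟨s, hs, rfl⟩ := hcases t (not_le.1 ht')
      rw [← hsplit s hs]
      exact (hconst _ le_rfl).union (htail s hs.le)
  · rw [timeSet_top, ← hu]
    refine IntegrableOn.union ?_ ?_
    · exact (integrableOn_congr_fun (f := fun _ => mnorm m (w - a) ^ 2)
        (fun s hs => by simp only [hψ1' s hs.2]) measurableSet_Ioc).1 (by simp)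
    · rw [IntegrableOn, ← hmp.integrable_comp_emb (measurableEmbedding_addRight τ)]
      exact (integrableOn_congr_fun (fun s hs => by
        simp only [Function.comp_apply, hψ2' s hs]) measurableSet_Ioi).1 h.inD.integrableOn_sq
  · rw [integral_hypIntegrand_shift hτ hcurve hψ2' hint]
    congr 1
    exact setIntegral_congr_fun measurableSet_Ioc fun t ht => by
      simp only [hψ1' t ht.2, hcurve1 t ht.2]

/-- A direction transversal to `a` in every pair of coordinates. -/
lemma exists_transversal (hd : 2 ≤ d) (m : Fin N → ℝ) (hm : ∀ i, 0 < m i) (a : Conf d N) :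
    ∃ η : Conf d N, inX m η ∧ ∀ i j, i ≠ j → η i - η j ∉ ℝ ∙ (a i - a j) := by
  let pr : Fin N → Conf d N →ₗ[ℝ] EuclideanSpace ℝ (Fin d) := fun i => LinearMap.proj i
  let S : {q : Fin N × Fin N // q.1 ≠ q.2} → Submodule ℝ (Conf d N) := fun q =>
    (ℝ ∙ (a q.1.1 - a q.1.2)).comap (pr q.1.1 - pr q.1.2)
  have hS : ∀ q, S q ≠ ⊤ := by
    rintro ⟨⟨i, j⟩, hij⟩ htop
    have hij : i ≠ j := hij
    have hspan : (ℝ ∙ (a i - a j)) ≠ ⊤ := fun h => by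
      have h1 := finrank_span_le_card (R := ℝ) ({a i - a j} : Set (EuclideanSpace ℝ (Fin d)))
      rw [h, toFinset_singleton, Finset.card_singleton, finrank_top, finrank_euclideanSpace_fin] at h1
      omega
    obtain ⟨e, he⟩ := SetLike.exists_not_mem_of_ne_top _ hspan rfl
    have : (Pi.single i e : Conf d N) ∈ S ⟨⟨i, j⟩, hij⟩ := htop ▸ Submodule.mem_top
    apply he
    simpa [S, pr, hij.symm] using this
  have hcov : ⋃ q, (S q : Set (Conf d N)) ≠ univ := fun h => by
    obtain ⟨q, hq⟩ := Subspace.exists_eq_top_of_iUnion_eq_univ h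
    exact hS q hq
  obtain ⟨η, hη⟩ := (ne_univ_iff_exists_notMem _).1 hcov
  simp only [mem_iUnion, not_exists] at hη
  refine ⟨fun i => η i - (∑ k, m k)⁻¹ • ∑ k, m k • η k, ?_, fun i j hij h => ?_⟩
  · simp only [inX, smul_sub, Finset.sum_sub_distrib, ← Finset.sum_smul]
    rcases isEmpty_or_nonempty (Fin N) with hN | hN
    · simp
    · have : ∑ k, m k ≠ 0 := (Finset.sum_pos (fun k _ => hm k) Finset.univ_nonempty).ne'
      rw [smul_smul, mul_inv_cancel₀ this, one_smul, sub_self]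
  · rw [sub_sub_sub_cancel_right] at h
    exact hη ⟨⟨i, j⟩, hij⟩ h

lemma exists_collision_free_curve {a x η : Conf d N} (ha : ¬ collision a) (hx : ¬ collision x)
    (hη : ∀ i j, i ≠ j → η i - η j ∉ ℝ ∙ (a i - a j)) :
    ∃ c : ℝ, ∀ t, 1 ≤ t → ¬ collision (x + (t - 1) • a + (c * (1 - t⁻¹)) • η) := by
  let bad : Fin N × Fin N → Set ℝ := fun q => {c | q.1 ≠ q.2 ∧ ∃ t, 1 ≤ t ∧
    (x q.1 - x q.2) + (t - 1) • (a q.1 - a q.2) + (c * (1 - t⁻¹)) • (η q.1 - η q.2) = 0}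
  have hbad : ∀ q, (bad q).Subsingleton := by
    rintro ⟨i, j⟩ c ⟨hij, t, ht, h⟩ c' ⟨-, t', ht', h'⟩
    simp only at hij h h'
    have hxne : x i - x j ≠ 0 := fun h => hx ⟨i, j, hij, sub_eq_zero.1 h⟩
    have hane : a i - a j ≠ 0 := fun h => ha ⟨i, j, hij, sub_eq_zero.1 h⟩
    have hsub : (c * (1 - t⁻¹) - c' * (1 - t'⁻¹)) • (η i - η j) = (t' - t) • (a i - a j) := by
      rw [← sub_eq_zero, ← sub_self (0 : EuclideanSpace ℝ (Fin d))]
      nth_rewrite 1 [← h]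
      rw [← h']
      module
    have hcoef : c * (1 - t⁻¹) - c' * (1 - t'⁻¹) = 0 := by
      by_contra hne
      refine hη i j hij (Submodule.mem_span_singleton.2
        ⟨(c * (1 - t⁻¹) - c' * (1 - t'⁻¹))⁻¹ * (t' - t), ?_⟩)
      rw [mul_smul, ← hsub, smul_smul, inv_mul_cancel₀ hne, one_smul]
    rw [hcoef, zero_smul, eq_comm, smul_eq_zero, or_iff_left hane, sub_eq_zero] at hsub
    subst hsub
    rw [← sub_mul, mul_eq_zero, sub_eq_zero, sub_eq_zero] at hcoef
    refine hcoef.resolve_right fun h1 => hxne ?_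
    have h1 : t' = 1 := by simpa using h1.symm
    simpa [h1] using h
  obtain ⟨c, hc⟩ := (Set.finite_iUnion fun q => (hbad q).finite).exists_notMem
  refine ⟨c, fun t ht => ?_⟩
  rintro ⟨i, j, hij, h⟩
  refine hc (mem_iUnion.2 ⟨⟨i, j⟩, hij, t, ht, ?_⟩)
  rw [← sub_eq_zero] at h
  rw [← h]
  simp only [Pi.add_apply, Pi.smul_apply]
  module

lemma exists_finiteAction (hd : 2 ≤ d) {m : Fin N → ℝ} (hm : ∀ i, 0 < m i) {a x : Conf d N}
    (ha : ¬ collision a) (hx : ¬ collision x) : ∃ φ φ', FiniteAction m a x φ φ' := by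
  obtain ⟨η, hηX, hη⟩ := exists_transversal hd m hm a
  obtain ⟨c, hc⟩ := exists_collision_free_curve ha hx hη
  set φ : ℝ → Conf d N := fun t => (c * (1 - t⁻¹)) • η with hφ
  set φ' : ℝ → Conf d N := fun t => (c * (t ^ 2)⁻¹) • η with hφ'
  have hcurve : ∀ t, hypCurve a x φ t = x + (t - 1) • a + (c * (1 - t⁻¹)) • η := fun t => by
    simp only [hypCurve, hφ]; module
  have hcont' : ContinuousOn φ' (Ici 1) := by
    have hpow : ContinuousOn (fun t : ℝ => t ^ 2) (Ici 1) := by fun_prop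
    refine (continuousOn_const.mul (hpow.inv₀ fun t ht => ?_)).smul continuousOn_const
    have : (1 : ℝ) ≤ t := ht
    positivity
  have hder : ∀ t, 1 ≤ t → HasDerivAt φ (φ' t) t := fun t ht => by
    have h := (((hasDerivAt_inv (by linarith : t ≠ 0)).const_sub 1).const_mul c).smul_const η
    simpa using h
  have hsq : ∀ t, mnorm m (φ' t) ^ 2 = c ^ 2 * mnorm m η ^ 2 * (t ^ 4)⁻¹ := fun t => by
    rw [mnorm_eq_norm hm, mnorm_eq_norm hm, hφ', map_smul, norm_smul, mul_pow, Real.norm_eq_abs,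
      sq_abs]
    ring
  have hsqi : IntegrableOn (fun t => mnorm m (φ' t) ^ 2) (Ioi 1) := by
    simp_rw [hsq]
    refine Integrable.const_mul ?_ _
    have := integrableOn_Ioi_rpow_of_lt (by norm_num : (-4 : ℝ) < -1) one_pos
    refine (integrableOn_congr_fun (fun t ht => ?_) measurableSet_Ioi).1 this
    have ht : (1 : ℝ) < t := ht
    rw [Real.rpow_neg (by linarith)]
    norm_cast
  refine ⟨φ, φ', ⟨by simp [hφ], fun t _ _ => inX_smul _ hηX, fun t ht _ => ?_, fun t ht _ => ?_,
    by rwa [timeSet_top]⟩, ?_, ?_⟩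
  · rw [← intervalIntegral.integral_of_le ht, intervalIntegral.integral_eq_sub_of_hasDerivAt
      (f := φ)]
    · simp [hφ]
    · intro s hs
      rw [uIcc_of_le ht] at hs
      exact hder s hs.1
    · refine ContinuousOn.intervalIntegrable (hcont'.mono ?_)
      rw [uIcc_of_le ht]
      exact Icc_subset_Ici_self
  · exact ((hcont'.mono Icc_subset_Ici_self).integrableOn_Icc).mono_set Ioc_subset_Icc_self
  · have hUi : IntegrableOn (fun t => U m (hypCurve a x φ t) - U m a / t) (Ici 1) := by
      have hcts : ContinuousOn (fun t => U m (hypCurve a x φ t) - U m a / t) (Ici 1) := by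
        intro t ht
        have ht : 1 ≤ t := ht
        have ht0 : t ≠ 0 := by linarith
        have hg : ContinuousAt (hypCurve a x φ) t := by
          have := (hder t ht).continuousAt
          unfold hypCurve
          fun_prop
        have hU : ContinuousAt (U m) (hypCurve a x φ t) :=
          (differentiableAt_U m (by rw [hcurve]; exact hc t ht)).continuousAt
        exact ((hU.comp hg).sub (continuousAt_const.div continuousAt_id ht0)).continuousWithinAt
      refine (hcts.locallyIntegrableOn measurableSet_Ici).integrableOn_of_isBigO_atTop
        (g := fun t : ℝ => t ^ (-2 : ℝ)) ?_
        ⟨Ioi 1, Ioi_mem_atTop 1, integrableOn_Ioi_rpow_of_lt (by norm_num) one_pos⟩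
      have hinv : Tendsto (fun t : ℝ => t⁻¹) atTop (𝓝 0) := tendsto_inv_atTop_zero
      have hbdd : (fun t : ℝ => (x - a) + (c * (1 - t⁻¹)) • η) =O[atTop] fun _ : ℝ => (1 : ℝ) := by
        have : Tendsto (fun t : ℝ => (x - a) + (c * (1 - t⁻¹)) • η) atTop
            (𝓝 ((x - a) + (c * (1 - 0)) • η)) :=
          tendsto_const_nhds.add (((hinv.const_sub 1).const_mul c).smul_const η)
        exact this.isBigO_one ℝ
      have hO : (fun t : ℝ => t⁻¹ • ((x - a) + (c * (1 - t⁻¹)) • η)) =O[atTop]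
          fun t : ℝ => t⁻¹ := by
        simpa using (Asymptotics.isBigO_refl (fun t : ℝ => t⁻¹) atTop).smul hbdd
      have hlim : Tendsto (fun t : ℝ => a + t⁻¹ • ((x - a) + (c * (1 - t⁻¹)) • η)) atTop
          (𝓝 a) := by
        simpa using tendsto_const_nhds.add (hO.trans_tendsto hinv)
      have hUO := ((differentiableAt_U m ha).isBigO_sub.comp_tendsto hlim)
      have hUO' : (fun t : ℝ => U m (a + t⁻¹ • ((x - a) + (c * (1 - t⁻¹)) • η)) - U m a)
          =O[atTop] fun t : ℝ => t⁻¹ := by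
        refine hUO.trans ?_
        simpa [Function.comp_def] using hO
      refine ((Asymptotics.isBigO_refl (fun t : ℝ => t⁻¹) atTop).mul hUO').congr' ?_ ?_
      · filter_upwards [eventually_gt_atTop 0] with t ht
        have e : hypCurve a x φ t = t • (a + t⁻¹ • ((x - a) + (c * (1 - t⁻¹)) • η)) := by
          rw [smul_add, smul_smul, mul_inv_cancel₀ ht.ne', hcurve]
          module
        rw [e, U_smul m _ ht]
        ring
      · filter_upwards [eventually_gt_atTop 0] with t ht
        rw [Real.rpow_neg ht.le, ← mul_inv, ← sq]
        norm_cast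
    refine (integrableOn_congr_fun (fun t ht => ?_) measurableSet_Ioi).1
      ((hsqi.div_const 2).add (hUi.mono_set Ioi_subset_Ici_self))
    have ht : (1 : ℝ) < t := ht
    rw [hypIntegrand, U_smul m a (by linarith)]
    simp only [Pi.add_apply]
    ring
  · filter_upwards [ae_restrict_mem measurableSet_Ioi] with t ht
    rw [hcurve]
    exact hc t (le_of_lt ht)

lemma InSuperdiff.exists_ball {m : Fin N → ℝ} {v : Conf d N → ℝ} {x p : Conf d N}
    (h : InSuperdiff m v x p) {ε : ℝ} (hε : 0 < ε) :
    ∃ δ > 0, ∀ y, inX m y → ‖y - x‖ < δ →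
      v y - v x - minner m p (y - x) ≤ ε * mnorm m (y - x) := by
  obtain ⟨δ, hδ, hball⟩ := Metric.mem_nhdsWithin_iff.1 (h ε hε)
  refine ⟨δ, hδ, fun y hy hyx => ?_⟩
  by_cases hne : y = x
  · simp [hne, minner, mnorm]
  · exact hball ⟨by rwa [Metric.mem_ball, dist_eq_norm], hy, hne⟩

lemma InSubdiff.exists_ball {m : Fin N → ℝ} {v : Conf d N → ℝ} {x p : Conf d N}
    (h : InSubdiff m v x p) {ε : ℝ} (hε : 0 < ε) :
    ∃ δ > 0, ∀ y, inX m y → ‖y - x‖ < δ →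
      -(ε * mnorm m (y - x)) ≤ v y - v x - minner m p (y - x) := by
  obtain ⟨δ, hδ, hball⟩ := Metric.mem_nhdsWithin_iff.1 (h ε hε)
  refine ⟨δ, hδ, fun y hy hyx => ?_⟩
  by_cases hne : y = x
  · simp [hne, minner, mnorm]
  · exact hball ⟨by rwa [Metric.mem_ball, dist_eq_norm], hy, hne⟩

lemma superdiff_estimate (hd : 2 ≤ d) {m : Fin N → ℝ} (hm : ∀ i, 0 < m i)
    {a x p : Conf d N} (ha : inOmega m a) (hx : inOmega m x) (hp : inX m p)
    (h : InSuperdiff m (hypValue m a) x p) {ε : ℝ} (hε : 0 < ε) :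
    mnorm m p ^ 2 / 2 - U m x ≤ mnorm m a ^ 2 / 2 + ε * (1 + mnorm m p) := by
  obtain ⟨δ₁, hδ₁, hv⟩ := h.exists_ball hε
  obtain ⟨δ₂, hδ₂, hU⟩ := exists_U_near m hx.2 hε
  obtain ⟨τ, hτ, hτδ⟩ : ∃ τ > 0, τ * ‖p‖ < min δ₁ δ₂ := by
    refine ⟨min δ₁ δ₂ / (2 * (‖p‖ + 1)), by positivity, ?_⟩
    have h0 : 0 < min δ₁ δ₂ := lt_min hδ₁ hδ₂
    rw [div_mul_eq_mul_div, div_lt_iff₀ (by positivity)]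
    nlinarith [norm_nonneg p]
  have hnear : ∀ s ∈ Icc 0 τ, ‖x + s • (-p) - x‖ < min δ₁ δ₂ := fun s hs => by
    rw [add_sub_cancel_left, norm_smul, norm_neg, Real.norm_of_nonneg hs.1]
    exact (mul_le_mul_of_nonneg_right hs.2 (norm_nonneg p)).trans_lt hτδ
  have hpX : inX m (-p) := by simpa using inX_smul (-1) hp
  have hcol : ∀ s ∈ Icc 0 τ, ¬ collision (x + s • (-p)) := fun s hs =>
    (hU _ ((hnear s hs).trans_le (min_le_right _ _))).1
  have hτm : τ ∈ Icc 0 τ := ⟨hτ.le, le_rfl⟩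
  have hbound : ∫ t in Ioc 1 (1 + τ), (mnorm m (-p - a) ^ 2 / 2 + U m (x + (t - 1) • (-p)))
      ≤ τ * (mnorm m (-p - a) ^ 2 / 2 + (U m x + ε)) := by
    have hc : ∫ t in Ioc 1 (1 + τ), (mnorm m (-p - a) ^ 2 / 2 + (U m x + ε)) =
        τ * (mnorm m (-p - a) ^ 2 / 2 + (U m x + ε)) := by
      rw [setIntegral_const, Real.volume_real_Ioc_of_le (by linarith), smul_eq_mul,
        add_sub_cancel_left]
    rw [← hc]
    refine integral_mono_of_nonneg (ae_of_all _ fun t => ?_) (by simp) ?_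
    · exact add_nonneg (by positivity) (U_nonneg hm _)
    · filter_upwards [ae_restrict_mem measurableSet_Ioc] with t ht
      have hs : t - 1 ∈ Icc 0 τ := ⟨by linarith [ht.1], by linarith [ht.2]⟩
      have := (abs_lt.1 (hU _ ((hnear _ hs).trans_le (min_le_right _ _))).2).2
      linarith
  have hdpp : (hypInf m a x ⊤).toReal ≤ (hypInf m a (x + τ • (-p)) ⊤).toReal +
      τ * (mnorm m (-p - a) ^ 2 / 2 + (U m x + ε)) := by
    refine le_of_forall_pos_le_add fun ε' hε' => ?_
    obtain ⟨φ, φ', hφ, hlt⟩ := exists_action_lt hm ha.2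
      (exists_finiteAction hd hm ha.2 (hcol τ hτm)) hε'
    obtain ⟨ψ, ψ', hψ, heq⟩ := hφ.exists_prepend ha.1 hpX hτ hcol
    have := toReal_hypInf_le hm ha.2 hψ
    linarith
  have hvy := hv (x + τ • (-p)) (inX_add hx.1 (inX_smul _ hpX))
    ((hnear τ hτm).trans_le (min_le_left _ _))
  simp only [hypValue, minner_eq_inner hm, mnorm_eq_norm hm, add_sub_cancel_left, map_add,
    map_smul, map_neg, map_sub, inner_add_right, real_inner_smul_right, inner_neg_right,
    real_inner_self_eq_norm_sq, norm_smul, norm_neg, Real.norm_of_nonneg hτ.le] at hvy hdpp ⊢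
  have hn : ‖-massEmbed m p - massEmbed m a‖ ^ 2 =
      ‖massEmbed m p‖ ^ 2 + 2 * ⟪massEmbed m a, massEmbed m p⟫ + ‖massEmbed m a‖ ^ 2 := by
    rw [← neg_add', norm_neg, norm_add_sq_real, real_inner_comm]
  rw [hn] at hdpp
  refine le_of_mul_le_mul_left ?_ hτ
  linarith

lemma subdiff_estimate (hd : 2 ≤ d) {m : Fin N → ℝ} (hm : ∀ i, 0 < m i)
    {a x p : Conf d N} (ha : inOmega m a) (hx : inOmega m x)
    (h : InSubdiff m (hypValue m a) x p) {ε : ℝ} (hε : 0 < ε) :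
    mnorm m a ^ 2 / 2 + U m x ≤ (mnorm m p + ε) ^ 2 / 2 + 2 * ε := by
  obtain ⟨δ₁, hδ₁, hv⟩ := h.exists_ball hε
  obtain ⟨δ₂, hδ₂, hU⟩ := exists_U_near m hx.2 hε
  obtain ⟨C, hC⟩ := exists_energy_le_action hm ha.2 x
  obtain ⟨K, hK, hnorm⟩ := exists_norm_le_mnorm (d := d) hm
  set E : ℝ := 4 * ((hypInf m a x ⊤).toReal + ε + C) with hE
  have hsmall : ∀ᶠ τ : ℝ in 𝓝[>] 0, K * √(τ * E) + τ * ‖a‖ < min δ₁ δ₂ := by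
    have hc : Continuous fun τ : ℝ => K * √(τ * E) + τ * ‖a‖ := by fun_prop
    have h0 : K * √(0 * E) + 0 * ‖a‖ < min δ₁ δ₂ := by simpa using And.intro hδ₁ hδ₂
    exact nhdsWithin_le_nhds ((hc.tendsto 0).eventually (gt_mem_nhds h0))
  obtain ⟨τ, ⟨hτsmall, hτ⟩, hτ1⟩ := ((hsmall.and self_mem_nhdsWithin).and
    (nhdsWithin_le_nhds (gt_mem_nhds one_pos))).exists
  have hτ : 0 < τ := hτ
  have hτ1 : τ < 1 := hτ1
  obtain ⟨φ, φ', hφ, hlt⟩ := exists_action_lt hm ha.2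
    (exists_finiteAction hd hm ha.2 hx.2) (mul_pos hτ hε)
  have henergy : ∫ t in Ioi 1, mnorm m (φ' t) ^ 2 ≤ E := by
    have := hC φ φ' hφ
    have : τ * ε ≤ ε := by nlinarith
    linarith
  have hE0 : 0 ≤ E := le_trans (integral_nonneg fun _ => sq_nonneg _) henergy
  have hnear : ∀ t ∈ Icc 1 (1 + τ), ‖hypCurve a x φ t - x‖ < min δ₁ δ₂ := fun t ht => by
    have e : hypCurve a x φ t - x = φ t + (t - 1) • a := by simp only [hypCurve]; module
    have ht0 : 0 ≤ t - 1 := by linarith [ht.1]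
    have ht1 : t - 1 ≤ τ := by linarith [ht.2]
    have h1 : mnorm m (φ t) ≤ √(τ * E) := by
      refine Real.le_sqrt_of_sq_le ((hφ.inD.mnorm_sq_le_energy hm ht.1).trans ?_)
      exact mul_le_mul ht1 henergy (integral_nonneg fun _ => sq_nonneg _) hτ.le
    calc ‖hypCurve a x φ t - x‖ ≤ ‖φ t‖ + (t - 1) * ‖a‖ := by
          rw [e]
          refine (norm_add_le _ _).trans ?_
          rw [norm_smul, Real.norm_of_nonneg ht0]
      _ ≤ K * √(τ * E) + τ * ‖a‖ := by
          refine add_le_add ((hnorm _).trans (mul_le_mul_of_nonneg_left h1 hK.le)) ?_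
          exact mul_le_mul_of_nonneg_right ht1 (norm_nonneg a)
      _ < _ := hτsmall
  obtain ⟨ψ, ψ', hψ, heq⟩ := hφ.exists_tail hτ
  have hsq : IntegrableOn (fun t => mnorm m (φ' t) ^ 2) (Ioc 1 (1 + τ)) :=
    hφ.inD.integrableOn_sq.mono_set Ioc_subset_Ioi_self
  have hci : IntegrableOn (fun _ : ℝ => U m x - ε) (Ioc 1 (1 + τ)) := by simp
  have hlag : IntegrableOn (fun t => mnorm m (φ' t) ^ 2 / 2 + U m (hypCurve a x φ t))
      (Ioc 1 (1 + τ)) := by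
    refine (integrableOn_congr_fun (fun t ht => ?_) measurableSet_Ioc).1
      ((hφ.integrable.mono_set Ioc_subset_Ioi_self).add
        (integrableOn_const_div_Ioc (U m a) (1 + τ)))
    simp only [Pi.add_apply, hypIntegrand]
    rw [U_smul m a (by linarith [ht.1])]
    ring
  have hlow : (∫ t in Ioc 1 (1 + τ), mnorm m (φ' t) ^ 2) / 2 + τ * (U m x - ε) ≤
      ∫ t in Ioc 1 (1 + τ), (mnorm m (φ' t) ^ 2 / 2 + U m (hypCurve a x φ t)) := by
    have hc : ∫ t in Ioc 1 (1 + τ), (mnorm m (φ' t) ^ 2 / 2 + (U m x - ε)) =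
        (∫ t in Ioc 1 (1 + τ), mnorm m (φ' t) ^ 2) / 2 + τ * (U m x - ε) := by
      rw [integral_add (hsq.div_const 2) hci, integral_div, setIntegral_const,
        Real.volume_real_Ioc_of_le (by linarith), smul_eq_mul, add_sub_cancel_left]
    rw [← hc]
    refine setIntegral_mono_on ((hsq.div_const 2).add hci) hlag measurableSet_Ioc fun t ht => ?_
    have := (abs_lt.1 (hU _ ((hnear t ⟨ht.1.le, ht.2⟩).trans_le (min_le_right _ _))).2).1
    linarith
  have hjensen := hφ.inD.mnorm_sq_le hm (by linarith : 1 < 1 + τ)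
  rw [add_sub_cancel_left] at hjensen
  have hVy := toReal_hypInf_le hm ha.2 hψ
  have hφX := hφ.inD.inX (by linarith : 1 ≤ 1 + τ)
  have hyX : inX m (hypCurve a x φ (1 + τ)) :=
    inX_sub (inX_add (inX_add hφX (inX_smul _ ha.1)) hx.1) ha.1
  have hvy := hv _ hyX ((hnear (1 + τ) ⟨by linarith, le_rfl⟩).trans_le (min_le_left _ _))
  obtain ⟨u, hu⟩ : ∃ u : Conf d N, φ (1 + τ) = τ • (u - a) :=
    ⟨τ⁻¹ • φ (1 + τ) + a, by rw [add_sub_cancel_right, smul_smul, mul_inv_cancel₀ hτ.ne', one_smul]⟩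
  have hy : hypCurve a x φ (1 + τ) = x + τ • u := by
    simp only [hypCurve, hu]; module
  rw [hu] at hjensen
  rw [hy] at hvy hVy heq
  set S := ∫ t in Ioc 1 (1 + τ), mnorm m (φ' t) ^ 2
  simp only [hypValue, minner_eq_inner hm, mnorm_eq_norm hm, add_sub_cancel_left, map_add,
    map_smul, map_sub, inner_add_right, real_inner_smul_right, norm_smul,
    Real.norm_of_nonneg hτ.le, mul_pow] at hvy hjensen ⊢
  have hS : τ * ‖massEmbed m u - massEmbed m a‖ ^ 2 ≤ S := by
    refine le_of_mul_le_mul_left ?_ hτ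
    linarith
  rw [norm_sub_sq_real, real_inner_comm] at hS
  have hcs := abs_le.1 (abs_real_inner_le_norm (massEmbed m p) (massEmbed m u))
  have hfinal : ⟪massEmbed m p, massEmbed m u⟫ - ε * ‖massEmbed m u‖ + ‖massEmbed m u‖ ^ 2 / 2
      + ‖massEmbed m a‖ ^ 2 / 2 + U m x ≤ 2 * ε := by
    refine le_of_mul_le_mul_left ?_ hτ
    linarith
  nlinarith [sq_nonneg (‖massEmbed m u‖ - (‖massEmbed m p‖ + ε))]

/-- **Hamilton–Jacobi theorem, hyperbolic case** : the renormalized value function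
`v(x) = min_φ A_x(φ) − ⟨a, x⟩_M` is a viscosity solution on `Ω` of
`½‖∇v‖_M² − U = ‖a‖_M²/2` : for every `x ∈ Ω`, `½‖p‖_M² − U(x) ≤ ‖a‖_M²/2` for all
`p ∈ D⁺v(x)` and `½‖p‖_M² − U(x) ≥ ‖a‖_M²/2` for all `p ∈ D⁻v(x)`. -/
theorem value_function_viscosity_hyperbolic {d N : ℕ} (hd : 2 ≤ d) (hN : 2 ≤ N)
    (m : Fin N → ℝ) (hm : ∀ i, 0 < m i)
    (a : Conf d N) (ha : inOmega m a)
    (x : Conf d N) (hx : inOmega m x) :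
    (∀ p : Conf d N, inX m p → InSuperdiff m (hypValue m a) x p →
      (mnorm m p) ^ 2 / 2 - U m x ≤ (mnorm m a) ^ 2 / 2) ∧
    (∀ p : Conf d N, inX m p → InSubdiff m (hypValue m a) x p →
      (mnorm m a) ^ 2 / 2 ≤ (mnorm m p) ^ 2 / 2 - U m x) := by
  refine ⟨fun p hp h => ?_, fun p _ h => ?_⟩
  · have hcont : Tendsto (fun ε : ℝ => mnorm m a ^ 2 / 2 + ε * (1 + mnorm m p)) (𝓝[>] 0)
        (𝓝 (mnorm m a ^ 2 / 2 + 0 * (1 + mnorm m p))) :=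
      Tendsto.mono_left (Continuous.tendsto (by fun_prop) 0) nhdsWithin_le_nhds
    rw [zero_mul, add_zero] at hcont
    refine ge_of_tendsto hcont ?_
    filter_upwards [self_mem_nhdsWithin] with ε hε
    exact superdiff_estimate hd hm ha hx hp h hε
  · have hcont : Tendsto (fun ε : ℝ => (mnorm m p + ε) ^ 2 / 2 + 2 * ε) (𝓝[>] 0)
        (𝓝 ((mnorm m p + 0) ^ 2 / 2 + 2 * 0)) :=
      Tendsto.mono_left (Continuous.tendsto (by fun_prop) 0) nhdsWithin_le_nhds
    rw [add_zero, mul_zero, add_zero] at hcont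
    have : mnorm m a ^ 2 / 2 + U m x ≤ mnorm m p ^ 2 / 2 := by
      refine ge_of_tendsto hcont ?_
      filter_upwards [self_mem_nhdsWithin] with ε hε
      exact subdiff_estimate hd hm ha hx h hε
    linarith

end NBodyHJ
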